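/- Let λ be a partition of n and k ≥ 1. Then, as formal power series in q_1,…,q_k: (Π_{i=1}^k (q_i;q_i)_n) · Σ_{T ∈ SYT(λ)} Σ_{S ∈ (ℕ^k)^n with σ_{des(T)}(S) = ε} q^S = Σ_{T ∈ SYT(λ)} Σ_{σ⃗ ∈ S_n^{k−1}} q_1^{comaj^1_T(σ⃗)} q_2^{comaj^2_T(σ⃗)} ⋯ q_k^{comaj^k_T(σ⃗)}. (The left-hand sum over pairs (T,S) equals the plethystic principal evaluation s_λ[1/((1−q_1)⋯(1−q_k))], i.e., the sum of q^P over semistandard tableaux of shape λ with entries in ℕ^k.) -/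

import Mathlib

open scoped Classical

namespace RomeroComaj

noncomputable section

/-- `Seq r` is `ℕ^r`, the type of sequences of natural numbers of length `r`. -/
abbrev Seq (r : ℕ) := Fin r → ℕ

/-- strict lexicographic order on `ℕ^r`. -/
def lexLt {r : ℕ} (a b : Seq r) : Prop :=
  ∃ i : Fin r, (∀ j : Fin r, j < i → a j = b j) ∧ a i < b i

/-- weak lexicographic order on `ℕ^r`. -/
def lexLe {r : ℕ} (a b : Seq r) : Prop :=
  lexLt a b ∨ a = b

/-- `RNbr R a b` : the (1-indexed) indices `a` and `b` are `R`-neighbors,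
i.e. (for `a < b`) all of `a, a+1, …, b-1` lie in `R`. -/
def RNbr (R : Finset ℕ) (a b : ℕ) : Prop :=
  ∀ t ∈ Finset.Ico (min a b) (max a b), t ∈ R

/-- the value `σ_i` of the one-line notation of `σ`, both position `i` and
the value being 1-indexed (junk value `0` outside `1 ≤ i ≤ n`). -/
def pget {n : ℕ} (σ : Equiv.Perm (Fin n)) (i : ℕ) : ℕ :=
  if h : i - 1 < n then (σ ⟨i - 1, h⟩).val + 1 else 0

/-- the sequence `s^i` of a list `S = (s^1, …, s^n)`, `i` being 1-indexed. -/
def sget {n r : ℕ} (S : Fin n → Seq r) (i : ℕ) : Seq r :=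
  if h : i - 1 < n then S ⟨i - 1, h⟩ else 0

/-- the condition for `i` to belong to `Des_{R,S}(σ)`:
`s^{σ_i} > s^{σ_{i+1}} − χ(σ_{i+1} < σ_i ∧ σ_{i+1} ≁_R σ_i) − χ(σ_{i+1} > σ_i ∧ σ_i ∼_R σ_{i+1})`. -/
def desCond {n r : ℕ} (R : Finset ℕ) (S : Fin n → Seq r) (σ : Equiv.Perm (Fin n)) (i : ℕ) :
    Prop :=
  if (pget σ (i+1) < pget σ i ∧ ¬ RNbr R (pget σ (i+1)) (pget σ i)) ∨
      (pget σ i < pget σ (i+1) ∧ RNbr R (pget σ i) (pget σ (i+1)))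
  then lexLe (sget S (pget σ (i+1))) (sget S (pget σ i))
  else lexLt (sget S (pget σ (i+1))) (sget S (pget σ i))

/-- `Des_{R,S}(σ) ⊆ {1, …, n−1}` (1-indexed positions). -/
def DesSet {n r : ℕ} (R : Finset ℕ) (S : Fin n → Seq r) (σ : Equiv.Perm (Fin n)) : Finset ℕ :=
  (Finset.Icc 1 (n-1)).filter (fun i => desCond R S σ i)

/-- `Comaj_{R,S}(σ) = ∑_{i ∈ Des_{R,S}(σ)} (n − i)`. -/
def Comaj {n r : ℕ} (R : Finset ℕ) (S : Fin n → Seq r) (σ : Equiv.Perm (Fin n)) : ℕ :=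
  ∑ i ∈ DesSet R S σ, (n - i)

/-- `s^i` is read before `s^j` in the reading order of `S` (with respect to `R`);
`i, j` are 1-indexed. -/
def readBefore {n r : ℕ} (R : Finset ℕ) (S : Fin n → Seq r) (i j : ℕ) : Prop :=
  lexLt (sget S i) (sget S j) ∨
    (sget S i = sget S j ∧ ((i < j ∧ ¬ RNbr R i j) ∨ (j < i ∧ RNbr R j i)))

/-- `IsReading R S σ` says that the reading permutation `σ_R(S)` equals `σ`,
i.e. `σ` lists `1, …, n` in the reading order of `S`. -/
def IsReading {n r : ℕ} (R : Finset ℕ) (S : Fin n → Seq r) (σ : Equiv.Perm (Fin n)) : Prop :=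
  ∀ i ∈ Finset.Icc 1 (n-1), readBefore R S (pget σ i) (pget σ (i+1))

/-- the operator `Z_{R,σ} : (ℕ^r)^n → (ℕ^{r+1})^n`, prepending to `s^v` the number of
descents of `σ` (w.r.t. `R, S`) at positions strictly before the position of `v` in `σ`. -/
def Zop {n r : ℕ} (R : Finset ℕ) (σ : Equiv.Perm (Fin n)) (S : Fin n → Seq r) :
    Fin n → Seq (r+1) :=
  fun v => Fin.cons ((DesSet R S σ ∩ Finset.Ico 1 ((σ.symm v).val + 1)).card) (S v)

/-- `Zvec R σs i = Z_{R,σ^i} ⋯ Z_{R,σ^1}(∅)` where `σ^{j+1} = σs j`. -/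
def Zvec {n : ℕ} (R : Finset ℕ) (σs : ℕ → Equiv.Perm (Fin n)) : (i : ℕ) → Fin n → Seq i
  | 0 => fun _ => (0 : Seq 0)
  | (i+1) => Zop R (σs i) (Zvec R σs i)

/-- extend a finite vector of permutations to `ℕ`, by the identity. -/
def extFun {n r : ℕ} (σv : Fin r → Equiv.Perm (Fin n)) : ℕ → Equiv.Perm (Fin n) :=
  fun j => if h : j < r then σv ⟨j, h⟩ else 1

/-- `comajI R k σv i = comaj^i_R(σ⃗)` for `1 ≤ i ≤ k`, where `σ⃗ = σv` has length `k−1`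
and `σ^k = ε`. -/
def comajI {n : ℕ} (R : Finset ℕ) (k : ℕ) (σv : Fin (k-1) → Equiv.Perm (Fin n)) (i : ℕ) : ℕ :=
  Comaj R (Zvec R (extFun σv) (i-1)) (extFun σv (i-1))

/-- the exponent of the monomial `q^S` for `S ∈ (ℕ^r)^n` : the (0-indexed) variable `i`
(that is, `q_{i+1}`) records the `(r−i)`-th (0-indexed: `r−1−i`-th) coordinates. -/
def expOf {n r : ℕ} (S : Fin n → Seq r) : Fin r →₀ ℕ :=
  Finsupp.equivFunOnFinite.symm (fun i => ∑ j : Fin n, S j (Fin.rev i))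

/-- the formal power series whose coefficient at a monomial `d` counts the elements
`a : α` satisfying `P a d`. -/
def countSeriesP {σty α : Type*} (P : α → (σty →₀ ℕ) → Prop) : MvPowerSeries σty ℤ :=
  fun d => (Nat.card {a : α // P a d} : ℤ)

/-- `∑_{S ∈ (ℕ^r)^n, P S} q^S`. -/
def countSeries {n r : ℕ} (P : (Fin n → Seq r) → Prop) : MvPowerSeries (Fin r) ℤ :=
  countSeriesP (fun S d => P S ∧ expOf S = d)

/-- the Pochhammer factor `(q_i; q_i)_n = ∏_{j=1}^n (1 − q_i^j)`. -/
def pochOne {r : ℕ} (n : ℕ) (i : Fin r) : MvPowerSeries (Fin r) ℤ :=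
  ∏ j ∈ Finset.Icc 1 n, (1 - (MvPowerSeries.X i : MvPowerSeries (Fin r) ℤ) ^ j)

/-- `∏_{i=1}^{r} (q_i; q_i)_n`. -/
def pochAll (n r : ℕ) : MvPowerSeries (Fin r) ℤ :=
  ∏ i : Fin r, pochOne n i

/-- the exponent of `q_1^{comaj¹_R(σ⃗)} ⋯ q_k^{comaj^k_R(σ⃗)}`. -/
def comajExp {n : ℕ} (R : Finset ℕ) (k : ℕ) (σv : Fin (k-1) → Equiv.Perm (Fin n)) :
    Fin k →₀ ℕ :=
  Finsupp.equivFunOnFinite.symm (fun i => comajI R k σv (i.val + 1))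

/-- A standard Young tableau of shape `μ` (with `μ.card` cells), recorded by the
position `pos i` of each (1-indexed) entry `i ∈ {1, …, μ.card}`; entries increase
left-to-right along rows and down columns (matrix convention), and `pos` is a
bijection from `{1, …, μ.card}` onto the cells of `μ` (normalized by `0` outside). -/
structure SYT (μ : YoungDiagram) where
  pos : ℕ → ℕ × ℕ
  mem : ∀ i ∈ Finset.Icc 1 μ.card, pos i ∈ μ
  inj : ∀ i ∈ Finset.Icc 1 μ.card, ∀ j ∈ Finset.Icc 1 μ.card, pos i = pos j → i = j
  surj : ∀ c ∈ μ, ∃ i ∈ Finset.Icc 1 μ.card, pos i = c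
  row_inc : ∀ i ∈ Finset.Icc 1 μ.card, ∀ j ∈ Finset.Icc 1 μ.card,
    (pos i).1 = (pos j).1 → (pos i).2 < (pos j).2 → i < j
  col_inc : ∀ i ∈ Finset.Icc 1 μ.card, ∀ j ∈ Finset.Icc 1 μ.card,
    (pos i).2 = (pos j).2 → (pos i).1 < (pos j).1 → i < j
  junk : ∀ i, i ∉ Finset.Icc 1 μ.card → pos i = 0

/-- `des(T)` : the set of `i ∈ {1, …, n−1}` such that `i+1` lies in a strictly
higher row of `T` than `i` (in matrix convention: a strictly larger row index). -/
def desSYT {μ : YoungDiagram} (T : SYT μ) : Finset ℕ :=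
  (Finset.Icc 1 (μ.card - 1)).filter (fun i => (T.pos i).1 < (T.pos (i+1)).1)

/-- the ordinary descent set `des(π) = {i : π_i > π_{i+1}}` (1-indexed). -/
def desPerm {n : ℕ} (π : Equiv.Perm (Fin n)) : Finset ℕ :=
  (Finset.Icc 1 (n-1)).filter (fun i => pget π (i+1) < pget π i)

/-- `comaj(π) = ∑_{i ∈ des(π)} (n − i)`. -/
def comajP {n : ℕ} (π : Equiv.Perm (Fin n)) : ℕ :=
  ∑ i ∈ desPerm π, (n - i)

/-!
Fix `R` and cut `{1, …, n}` into blocks of `R`-neighbors. The reading order of a list `S` compares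
first the sequences `s^i`, then the blocks, and reverses the order inside a block: it is the order
of a sort key, and `i` is a descent of `σ` exactly when the keys of `σ_i` and `σ_{i+1}` are out of
order.

Hence prepending entries `x` to `S` produces a list with reading permutation `σ` if and only if the
entries of `x`, listed in the order `σ`, jump by at least `1` at each descent and by at least `0`
elsewhere. The minimal choice is `Z_{R,σ}(S)`, and any other choice adds arbitrary `c_1, …, c_n ≥ 0`
to the jumps, where `c_j` contributes `c_j (n - j + 1)` to the sum of the entries. Iterating, each
list with reading permutation `ε` comes from a unique choice of `σ¹, …, σ^{k-1}` and of the
increments: descents depend on a list only through its reading permutation, so the `σ^i` contribute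
their `comaj` statistics, and the increments contribute geometric series, cancelled by
`∏ (q_i;q_i)_n`.
-/

section GeneratingSeries

open MvPowerSeries

variable {τ α β : Type*}

/-- The generating series `∑ a, q ^ w a`. A monomial with infinitely many preimages under `w` gets
the junk coefficient `0`, hence the finiteness assumptions below. -/
def genSeries (w : α → τ →₀ ℕ) : MvPowerSeries τ ℤ :=
  countSeriesP fun a d => w a = d

theorem coeff_genSeries (w : α → τ →₀ ℕ) (d : τ →₀ ℕ) :
    coeff d (genSeries w) = (Nat.card (w ⁻¹' {d}) : ℤ) :=
  rfl

theorem genSeries_comp_equiv (f : β ≃ α) (w : α → τ →₀ ℕ) :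
    genSeries (w ∘ f) = genSeries w := by
  ext d
  simp only [coeff_genSeries]
  exact congrArg _ (Nat.card_congr (f.subtypeEquiv fun _ => Iff.rfl))

theorem countSeriesP_eq_genSeries_comp {P : α → Prop} {w : α → τ →₀ ℕ} {f : β → α}
    (hf : f.Injective) (hP : ∀ a, P a ↔ a ∈ Set.range f) :
    countSeriesP (fun a d => P a ∧ w a = d) = genSeries (w ∘ f) := by
  have hmem : ∀ b, P (f b) := fun b => (hP _).2 ⟨b, rfl⟩
  ext d
  refine congrArg Nat.cast (Nat.card_eq_of_bijective
    (fun b : (w ∘ f) ⁻¹' {d} => ⟨f b, hmem b, b.2⟩) ⟨?_, ?_⟩).symm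
  · exact fun b b' h => Subtype.ext (hf (congrArg Subtype.val h))
  · rintro ⟨a, ha, hd⟩
    obtain ⟨b, rfl⟩ := (hP a).1 ha
    exact ⟨⟨b, hd⟩, rfl⟩

theorem genSeries_sumElim {w : α → τ →₀ ℕ} {v : β → τ →₀ ℕ}
    (hw : ∀ d, (w ⁻¹' {d}).Finite) (hv : ∀ d, (v ⁻¹' {d}).Finite) :
    genSeries (Sum.elim w v) = genSeries w + genSeries v := by
  ext d
  have := (hw d).to_subtype
  have := (hv d).to_subtype
  simp only [map_add, coeff_genSeries]
  rw [Nat.card_congr (Equiv.subtypeSum (p := (· ∈ Sum.elim w v ⁻¹' {d})))]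
  exact_mod_cast Nat.card_sum (α := w ⁻¹' {d}) (β := v ⁻¹' {d})

theorem genSeries_add_const (w : α → τ →₀ ℕ) (e : τ →₀ ℕ) :
    genSeries (fun a => w a + e) = monomial e 1 * genSeries w := by
  ext d
  simp only [coeff_monomial_mul, coeff_genSeries, one_mul]
  split_ifs with hed
  · congr 3
    ext a
    simp only [Set.mem_preimage, Set.mem_singleton_iff, eq_tsub_iff_add_eq_of_le hed]
  · have : (fun a => w a + e) ⁻¹' {d} = ∅ := by
      ext a
      simpa using fun h : w a + e = d => hed (h ▸ le_add_self)
    simp [this]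

theorem finite_preimage_add_smul {w : α → τ →₀ ℕ} (hw : ∀ d, (w ⁻¹' {d}).Finite)
    {e : τ →₀ ℕ} (he : e ≠ 0) (d : τ →₀ ℕ) :
    ((fun p : α × ℕ => w p.1 + p.2 • e) ⁻¹' {d}).Finite := by
  obtain ⟨i, hi⟩ := Finsupp.ne_iff.1 he
  have hle : (w ⁻¹' Set.Iic d).Finite := (Set.finite_Iic d).preimage' fun d _ => hw d
  refine (hle.prod (Set.finite_Iic (d i))).subset ?_
  rintro ⟨a, m⟩ rfl
  refine ⟨show w a ≤ w a + m • e from le_self_add, ?_⟩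
  calc m ≤ m * e i := Nat.le_mul_of_pos_right m (Nat.pos_of_ne_zero hi)
    _ ≤ w a i + m * e i := Nat.le_add_left _ _

theorem one_sub_monomial_mul_genSeries {w : α → τ →₀ ℕ} (hw : ∀ d, (w ⁻¹' {d}).Finite)
    {e : τ →₀ ℕ} (he : e ≠ 0) :
    (1 - monomial e 1) * genSeries (fun p : α × ℕ => w p.1 + p.2 • e) = genSeries w := by
  set W : α × ℕ → τ →₀ ℕ := fun p => w p.1 + p.2 • e
  have hfin : ∀ d, (W ⁻¹' {d}).Finite := finite_preimage_add_smul hw he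
  let f : α ⊕ (α × ℕ) ≃ α × ℕ :=
    { toFun := Sum.elim (fun a => (a, 0)) fun p => (p.1, p.2 + 1)
      invFun := fun p => Nat.casesOn p.2 (Sum.inl p.1) fun m => Sum.inr (p.1, m)
      left_inv := by rintro (a | ⟨a, m⟩) <;> rfl
      right_inv := by rintro ⟨a, _ | m⟩ <;> rfl }
  have hf : W ∘ f = Sum.elim w fun p => W p + e := by
    ext1 (a | ⟨a, m⟩)
    · simp [W, f]
    · simp [W, f, succ_nsmul, add_assoc]
  have hfin' : ∀ d, ((fun p => W p + e) ⁻¹' {d}).Finite := fun d => by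
    have := (hfin d).preimage (f.injective.comp Sum.inr_injective).injOn
    rwa [← Set.preimage_comp, ← Function.comp_assoc, hf, Sum.elim_comp_inr] at this
  have key : genSeries W = genSeries w + monomial e 1 * genSeries W := by
    rw [← genSeries_add_const, ← genSeries_sumElim hw hfin', ← hf, genSeries_comp_equiv]
  linear_combination key

theorem prod_one_sub_monomial_mul_genSeries_fin {N : ℕ} {e : Fin N → τ →₀ ℕ}
    (he : ∀ i, e i ≠ 0) {w : α → τ →₀ ℕ} (hw : ∀ d, (w ⁻¹' {d}).Finite) :
    (∏ i, (1 - monomial (e i) 1)) *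
      genSeries (fun p : α × (Fin N → ℕ) => w p.1 + ∑ i, p.2 i • e i) = genSeries w := by
  induction N generalizing α with
  | zero =>
    rw [← genSeries_comp_equiv (Equiv.prodUnique α (Fin 0 → ℕ)) w]
    simp [Function.comp_def]
  | succ N ih =>
    let f : (α × ℕ) × (Fin N → ℕ) ≃ α × (Fin (N + 1) → ℕ) :=
      (Equiv.prodAssoc _ _ _).trans ((Equiv.refl α).prodCongr (Fin.consEquiv fun _ => ℕ))
    rw [← one_sub_monomial_mul_genSeries hw (he 0),
      ← ih (fun i => he i.succ) (finite_preimage_add_smul hw (he 0)), Fin.prod_univ_succ,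
      mul_assoc, ← genSeries_comp_equiv f]
    simp [f, Function.comp_def, Fin.sum_univ_succ, add_assoc]

theorem prod_one_sub_monomial_mul_genSeries {ι : Type*} [Fintype ι] {e : ι → τ →₀ ℕ}
    (he : ∀ i, e i ≠ 0) {w : α → τ →₀ ℕ} (hw : ∀ d, (w ⁻¹' {d}).Finite) :
    (∏ i, (1 - monomial (e i) 1)) *
      genSeries (fun p : α × (ι → ℕ) => w p.1 + ∑ i, p.2 i • e i) = genSeries w := by
  let f := (Fintype.equivFin ι).symm
  rw [← prod_one_sub_monomial_mul_genSeries_fin (e := e ∘ f) (fun i => he _) hw, ← f.prod_comp,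
    ← genSeries_comp_equiv ((Equiv.refl α).prodCongr (f.arrowCongr (Equiv.refl ℕ)))]
  congr 2
  ext1 p
  simp [← f.sum_comp, Equiv.arrowCongr]

end GeneratingSeries

section CumulativeSums

variable {ι M : Type*} [LinearOrder ι] [LocallyFiniteOrderBot ι]

/-- The cumulative sums of a family indexed by a linear order with finite initial segments. -/
def cumSum [AddCommMonoid M] (d : ι → M) (b : ι) : M :=
  ∑ a ∈ Finset.Iic b, d a

theorem cumSum_of_isMin [AddCommMonoid M] (d : ι → M) {b : ι} (hb : IsMin b) :
    cumSum d b = d b := by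
  rw [cumSum, ← Finset.sum_Iio_add_eq_sum_Iic, hb.finsetIio_eq, Finset.sum_empty, zero_add]

theorem cumSum_of_covBy [AddCommMonoid M] (d : ι → M) {a b : ι} (hab : a ⋖ b) :
    cumSum d b = cumSum d a + d b := by
  have : Finset.Iio b = Finset.Iic a := by
    rw [← Finset.coe_inj, Finset.coe_Iio, Finset.coe_Iic, hab.Iio_eq]
  rw [cumSum, ← Finset.sum_Iio_add_eq_sum_Iic, this, cumSum]

theorem cumSum_injective [AddCommMonoid M] [IsLeftCancelAdd M] [WellFoundedLT ι] :
    Function.Injective (cumSum : (ι → M) → ι → M) := by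
  intro d d' h
  funext b
  induction b using WellFoundedLT.induction with
  | ind b ih =>
    have hb := congrFun h b
    simp only [cumSum, ← Finset.sum_Iio_add_eq_sum_Iic] at hb
    rwa [Finset.sum_congr rfl fun a ha => ih a (Finset.mem_Iio.1 ha), add_right_inj] at hb

theorem exists_cumSum_eq_of_monotone [PredOrder ι] [WellFoundedLT ι] {y : ι → ℕ}
    (hy : Monotone y) : ∃ d, cumSum d = y := by
  refine ⟨fun b => if IsMin b then y b else y b - y (Order.pred b), funext fun b => ?_⟩
  induction b using WellFoundedLT.induction with
  | ind b ih =>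
    by_cases hb : IsMin b
    · rw [cumSum_of_isMin _ hb, if_pos hb]
    · have hcov := Order.pred_covBy_of_not_isMin hb
      rw [cumSum_of_covBy _ hcov, ih _ hcov.lt, if_neg hb, add_tsub_cancel_of_le (hy hcov.le)]

theorem sum_cumSum [AddCommMonoid M] [LocallyFiniteOrderTop ι] [Fintype ι] (d : ι → M) :
    ∑ b, cumSum d b = ∑ a, (Finset.Ici a).card • d a := by
  simp only [cumSum, ← Finset.sum_const]
  exact Finset.sum_comm' (by simp)

end CumulativeSums

section Reading

variable {n r s : ℕ} {R : Finset ℕ}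

theorem rNbr_iff_count_eq {i j : ℕ} :
    RNbr R i j ↔ Nat.count (· ∉ R) i = Nat.count (· ∉ R) j := by
  wlog hij : i ≤ j generalizing i j
  · rw [eq_comm, ← this (le_of_not_ge hij), RNbr, RNbr, min_comm, max_comm]
  obtain ⟨m, rfl⟩ := Nat.exists_eq_add_of_le hij
  rw [Nat.count_add, eq_comm, Nat.add_eq_left, Nat.count_iff_forall_not]
  simp only [RNbr, min_eq_left hij, max_eq_right hij, Finset.mem_Ico, not_not]
  exact ⟨fun h t ht => h _ (by omega), fun h t ht => by
    simpa [Nat.add_sub_cancel' ht.1] using h (t - i) (by omega)⟩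

/-- A sort key for the reading order: indices are read by increasing value, then by increasing
block of `R`-neighbors, and backwards within a block. Counting the elements `t ∉ R` below an index
numbers its block. -/
def readKey (R : Finset ℕ) (S : Fin n → Seq r) (v : Fin n) : Lex (Seq r) ×ₗ ℕ ×ₗ (Fin n)ᵒᵈ :=
  toLex (toLex (S v), toLex (Nat.count (· ∉ R) (v + 1), OrderDual.toDual v))

theorem sget_val_add_one (S : Fin n → Seq r) (a : Fin n) : sget S (a + 1) = S a := by
  simp [sget]

theorem readKey_lt_readKey_iff {S : Fin n → Seq r} {a b : Fin n} :
    readKey R S a < readKey R S b ↔ lexLt (S a) (S b) ∨ S a = S b ∧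
      (Nat.count (· ∉ R) (a + 1) < Nat.count (· ∉ R) (b + 1) ∨
        Nat.count (· ∉ R) (a + 1) = Nat.count (· ∉ R) (b + 1) ∧ b < a) := by
  simp only [readKey, Prod.Lex.toLex_lt_toLex, OrderDual.toDual_lt_toDual, toLex_inj]
  rfl

theorem readKey_injective (S : Fin n → Seq r) : Function.Injective (readKey R S) := by
  intro a b h
  simp only [readKey, toLex_inj, Prod.mk.injEq, OrderDual.toDual_inj] at h
  exact h.2.2

theorem readBefore_iff_readKey_lt {S : Fin n → Seq r} {a b : Fin n} :
    readBefore R S (a + 1) (b + 1) ↔ readKey R S a < readKey R S b := by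
  have hab : a < b → Nat.count (· ∉ R) (a + 1) ≤ Nat.count (· ∉ R) (b + 1) :=
    fun h => Nat.count_monotone _ (Nat.succ_le_succ h.le)
  have hba : b ≤ a → Nat.count (· ∉ R) (b + 1) ≤ Nat.count (· ∉ R) (a + 1) :=
    fun h => Nat.count_monotone _ (Nat.succ_le_succ h)
  simp only [readBefore, readKey_lt_readKey_iff, sget_val_add_one, rNbr_iff_count_eq,
    Nat.add_lt_add_iff_right, Fin.val_fin_lt]
  grind

theorem pget_val_add_one (σ : Equiv.Perm (Fin n)) (a : Fin n) : pget σ (a + 1) = σ a + 1 := by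
  simp [pget]

theorem pget_val_of_covBy (σ : Equiv.Perm (Fin n)) {a b : Fin n} (hab : a ⋖ b) :
    pget σ b = σ a + 1 := by
  rw [← pget_val_add_one, Nat.covBy_iff_add_one_eq.1 (Fin.covBy_iff.1 hab)]

theorem forall_mem_Icc_iff_forall_covBy {P : ℕ → Prop} :
    (∀ i ∈ Finset.Icc 1 (n - 1), P i) ↔ ∀ a b : Fin n, a ⋖ b → P b := by
  simp only [Fin.covBy_iff, Nat.covBy_iff_add_one_eq, Finset.mem_Icc]
  refine ⟨fun h a b hab => h b (by omega), fun h i hi => ?_⟩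
  exact h ⟨i - 1, by omega⟩ ⟨i, by omega⟩ (Nat.sub_add_cancel hi.1)

theorem isReading_iff_strictMono {S : Fin n → Seq r} {σ : Equiv.Perm (Fin n)} :
    IsReading R S σ ↔ StrictMono (readKey R S ∘ σ) := by
  rw [IsReading, forall_mem_Icc_iff_forall_covBy, strictMono_iff_forall_covBy]
  refine forall₃_congr fun a b hab => ?_
  rw [pget_val_of_covBy σ hab, pget_val_add_one, readBefore_iff_readKey_lt, Function.comp_apply,
    Function.comp_apply]

theorem desCond_iff_readBefore {S : Fin n → Seq r} {σ : Equiv.Perm (Fin n)} {i : ℕ} :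
    desCond R S σ i ↔ readBefore R S (pget σ (i + 1)) (pget σ i) := by
  rw [desCond, readBefore, lexLe]
  split_ifs <;> tauto

theorem coe_mem_desSet_iff {S : Fin n → Seq r} {σ : Equiv.Perm (Fin n)} {a b : Fin n}
    (hab : a ⋖ b) : (b : ℕ) ∈ DesSet R S σ ↔ readKey R S (σ b) < readKey R S (σ a) := by
  have hb : (b : ℕ) ∈ Finset.Icc 1 (n - 1) := by
    have := Nat.covBy_iff_add_one_eq.1 (Fin.covBy_iff.1 hab)
    exact Finset.mem_Icc.2 (by omega)
  rw [DesSet, Finset.mem_filter, and_iff_right hb, desCond_iff_readBefore,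
    pget_val_of_covBy σ hab, pget_val_add_one, readBefore_iff_readKey_lt]

theorem existsUnique_isReading (R : Finset ℕ) (S : Fin n → Seq r) : ∃! σ, IsReading R S σ := by
  simp only [isReading_iff_strictMono]
  refine ⟨Tuple.sort (readKey R S), ?_, fun τ hτ => ?_⟩
  · exact (Tuple.monotone_sort _).strictMono_of_injective
      ((readKey_injective S).comp (Equiv.injective _))
  · have := Tuple.unique_monotone hτ.monotone (Tuple.monotone_sort (readKey R S))
    exact DFunLike.coe_injective ((readKey_injective S).comp_left this)

theorem IsReading.readKey_lt_iff {S : Fin n → Seq r} {σ : Equiv.Perm (Fin n)}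
    (h : IsReading R S σ) {a b : Fin n} :
    readKey R S a < readKey R S b ↔ σ.symm a < σ.symm b := by
  rw [← (isReading_iff_strictMono.1 h).lt_iff_lt]
  simp

theorem IsReading.desSet_eq {S : Fin n → Seq r} {S' : Fin n → Seq s} {τ : Equiv.Perm (Fin n)}
    (h : IsReading R S τ) (h' : IsReading R S' τ) : DesSet R S = DesSet R S' := by
  funext σ
  refine Finset.filter_congr (forall_mem_Icc_iff_forall_covBy.2 fun a b hab => ?_)
  rw [desCond_iff_readBefore, desCond_iff_readBefore, pget_val_of_covBy σ hab, pget_val_add_one,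
    readBefore_iff_readKey_lt, readBefore_iff_readKey_lt, h.readKey_lt_iff, h'.readKey_lt_iff]

end Reading

section Operators

variable {n r : ℕ} {R : Finset ℕ} {σ : Equiv.Perm (Fin n)} {S : Fin n → Seq r}

/-- The list obtained from `S` by prepending the entry `x v` to each sequence `S v`. -/
def prepend (x : Fin n → ℕ) (S : Fin n → Seq r) (v : Fin n) : Seq (r + 1) :=
  Fin.cons (x v) (S v)

theorem prepend_inj {x x' : Fin n → ℕ} {S S' : Fin n → Seq r} :
    prepend x S = prepend x' S' ↔ x = x' ∧ S = S' := by
  simp only [funext_iff (f := prepend x S), prepend, Fin.cons_inj, forall_and, ← funext_iff]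

theorem exists_prepend_eq (S : Fin n → Seq (r + 1)) : ∃ x S', prepend x S' = S :=
  ⟨fun v => S v 0, fun v => Fin.tail (S v), funext fun v => Fin.cons_self_tail (S v)⟩

theorem lexLt_cons_iff {x y : ℕ} {a b : Seq r} :
    lexLt (Fin.cons x a : Seq (r + 1)) (Fin.cons y b) ↔ x < y ∨ x = y ∧ lexLt a b := by
  simp [lexLt, Fin.exists_fin_succ, Fin.forall_fin_succ, Fin.succ_pos, and_assoc]

theorem readKey_prepend_lt_iff {x : Fin n → ℕ} {a b : Fin n} :
    readKey R (prepend x S) a < readKey R (prepend x S) b ↔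
      x a < x b ∨ x a = x b ∧ readKey R S a < readKey R S b := by
  simp only [readKey_lt_readKey_iff, prepend, lexLt_cons_iff, Fin.cons_inj]
  tauto

/-- The indicator function of the descent set of `σ`. A descent `j`, between the 1-indexed positions
`j` and `j + 1`, is a jump from entry `j - 1` to entry `j` in the 0-indexing of `Fin n`. -/
def desJump (R : Finset ℕ) (S : Fin n → Seq r) (σ : Equiv.Perm (Fin n)) (j : Fin n) : ℕ :=
  if (j : ℕ) ∈ DesSet R S σ then 1 else 0

theorem desJump_of_isMin {b : Fin n} (hb : IsMin b) : desJump R S σ b = 0 := by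
  have : (b : ℕ) = 0 := by
    have := hb (Fin.le_def.2 (Nat.zero_le b) : (⟨0, b.pos⟩ : Fin n) ≤ b)
    simpa [Fin.le_def] using this
  simp [desJump, DesSet, this]

theorem isReading_prepend_comp_symm_iff {y : Fin n → ℕ} :
    IsReading R (prepend (y ∘ σ.symm) S) σ ↔ ∀ a b, a ⋖ b → y a + desJump R S σ b ≤ y b := by
  rw [isReading_iff_strictMono, strictMono_iff_forall_covBy]
  refine forall₃_congr fun a b hab => ?_
  have hlt : readKey R S (σ a) < readKey R S (σ b) ↔ (b : ℕ) ∉ DesSet R S σ := by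
    rw [coe_mem_desSet_iff hab, not_lt, le_iff_lt_or_eq,
      (readKey_injective S).eq_iff, σ.injective.eq_iff, or_iff_left hab.lt.ne]
  simp only [Function.comp_apply, readKey_prepend_lt_iff, Equiv.symm_apply_apply, hlt, desJump]
  split_ifs with hb
  · simp [hb]
  · simp [hb, le_iff_lt_or_eq]

theorem isReading_prepend_cumSum_iff {d : Fin n → ℕ} :
    IsReading R (prepend (cumSum d ∘ σ.symm) S) σ ↔ desJump R S σ ≤ d := by
  rw [isReading_prepend_comp_symm_iff]
  refine ⟨fun h b => ?_, fun h a b hab => ?_⟩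
  · by_cases hb : IsMin b
    · simp [desJump_of_isMin hb]
    · have hcov := Order.pred_covBy_of_not_isMin hb
      have := h _ _ hcov
      rwa [cumSum_of_covBy d hcov, add_le_add_iff_left] at this
  · rw [cumSum_of_covBy d hab]
    exact Nat.add_le_add_left (h b) _

theorem cumSum_desJump (p : Fin n) :
    cumSum (desJump R S σ) p = (DesSet R S σ ∩ Finset.Ico 1 (p + 1)).card := by
  calc cumSum (desJump R S σ) p = ∑ i ∈ Finset.Iic (p : ℕ), if i ∈ DesSet R S σ then 1 else 0 := by
        rw [← Fin.map_valEmbedding_Iic, Finset.sum_map]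
        rfl
    _ = (DesSet R S σ ∩ Finset.Ico 1 (p + 1)).card := by
        rw [Finset.sum_boole, Nat.cast_id]
        congr 1
        ext i
        simp only [DesSet, Finset.mem_filter, Finset.mem_inter, Finset.mem_Icc, Finset.mem_Iic,
          Finset.mem_Ico]
        grind

theorem sum_desJump_mul (g : ℕ → ℕ) :
    ∑ j, desJump R S σ j * g j = ∑ i ∈ DesSet R S σ, g i := by
  simp only [desJump, ite_mul, one_mul, zero_mul]
  rw [Fin.sum_univ_eq_sum_range fun i => if i ∈ DesSet R S σ then g i else 0,
    ← Finset.sum_filter]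
  congr 1
  ext i
  simp only [DesSet, Finset.mem_filter, Finset.mem_range, Finset.mem_Icc]
  grind

/-- The operator `Zop R σ` with the jumps of the prepended entries, read in the order `σ`,
increased by `c`. -/
def zopAdd (R : Finset ℕ) (σ : Equiv.Perm (Fin n)) (S : Fin n → Seq r) (c : Fin n → ℕ) :
    Fin n → Seq (r + 1) :=
  prepend (cumSum (c + desJump R S σ) ∘ σ.symm) S

theorem zopAdd_zero : zopAdd R σ S 0 = Zop R σ S := by
  funext v
  simp only [zopAdd, Zop, prepend, zero_add, Function.comp_apply, cumSum_desJump]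

theorem isReading_zopAdd (R : Finset ℕ) (σ : Equiv.Perm (Fin n)) (S : Fin n → Seq r)
    (c : Fin n → ℕ) : IsReading R (zopAdd R σ S c) σ :=
  isReading_prepend_cumSum_iff.2 le_add_self

theorem zopAdd_inj {σ' : Equiv.Perm (Fin n)} {S' : Fin n → Seq r} {c c' : Fin n → ℕ} :
    zopAdd R σ S c = zopAdd R σ' S' c' ↔ σ = σ' ∧ S = S' ∧ c = c' := by
  refine ⟨fun h => ?_, by rintro ⟨rfl, rfl, rfl⟩; rfl⟩
  obtain rfl := (existsUnique_isReading R _).unique (isReading_zopAdd R σ S c)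
    (h ▸ isReading_zopAdd R σ' S' c')
  obtain ⟨hx, rfl⟩ := prepend_inj.1 h
  have hc := cumSum_injective (σ.symm.surjective.injective_comp_right hx)
  exact ⟨rfl, rfl, add_right_cancel hc⟩

theorem exists_zopAdd_eq_of_isReading {S : Fin n → Seq (r + 1)} (h : IsReading R S σ) :
    ∃ S' c, zopAdd R σ S' c = S := by
  obtain ⟨x, S, rfl⟩ := exists_prepend_eq S
  obtain ⟨y, rfl⟩ : ∃ y, y ∘ σ.symm = x := ⟨x ∘ σ, by simp [Function.comp_assoc]⟩
  have hy : Monotone y := (monotone_iff_forall_covBy y).2 fun a b hab =>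
    (Nat.le_add_right _ _).trans (isReading_prepend_comp_symm_iff.1 h a b hab)
  obtain ⟨d, rfl⟩ := exists_cumSum_eq_of_monotone hy
  refine ⟨S, d - desJump R S σ, ?_⟩
  rw [zopAdd, tsub_add_cancel_of_le (isReading_prepend_cumSum_iff.1 h)]

theorem sum_zopAdd_apply_zero (c : Fin n → ℕ) :
    ∑ v, zopAdd R σ S c v 0 = Comaj R S σ + ∑ j, c j * (n - j) := by
  calc ∑ v, zopAdd R σ S c v 0 = ∑ p, cumSum (c + desJump R S σ) p :=
        Equiv.sum_comp σ.symm (cumSum (c + desJump R S σ))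
    _ = ∑ j, (desJump R S σ j * (n - j) + c j * (n - j)) := by
        rw [sum_cumSum]
        refine Finset.sum_congr rfl fun j _ => ?_
        rw [Fin.card_Ici, Pi.add_apply, smul_eq_mul]
        ring
    _ = Comaj R S σ + ∑ j, c j * (n - j) := by
        rw [Finset.sum_add_distrib, sum_desJump_mul (n - ·), Comaj]

end Operators

section Iteration

variable {n k : ℕ} {R : Finset ℕ}

/-- The list obtained from the list of empty sequences by applying `zopAdd R` to the successive
permutations and increments in `f`. -/
def zvecAdd (R : Finset ℕ) : (k : ℕ) → (Fin k → Equiv.Perm (Fin n) × (Fin n → ℕ)) → Fin n → Seq k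
  | 0, _ => 0
  | k + 1, f => zopAdd R (f (Fin.last k)).1 (zvecAdd R k (Fin.init f)) (f (Fin.last k)).2

theorem isReading_zvecAdd_last (R : Finset ℕ)
    (f : Fin (k + 1) → Equiv.Perm (Fin n) × (Fin n → ℕ)) :
    IsReading R (zvecAdd R (k + 1) f) (f (Fin.last k)).1 :=
  isReading_zopAdd R _ _ _

theorem zvecAdd_injective (R : Finset ℕ) (k : ℕ) :
    Function.Injective (zvecAdd (n := n) R k) := by
  induction k with
  | zero => exact Function.injective_of_subsingleton _
  | succ k ih =>
    intro f g h
    obtain ⟨hσ, hS, hc⟩ := zopAdd_inj.1 h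
    rw [← Fin.snoc_init_self f, ← Fin.snoc_init_self g, ih hS, Prod.ext hσ hc]

theorem zvecAdd_surjective (R : Finset ℕ) (k : ℕ) :
    Function.Surjective (zvecAdd (n := n) R k) := by
  induction k with
  | zero => exact fun S => ⟨Fin.elim0, Subsingleton.elim _ _⟩
  | succ k ih =>
    intro S
    obtain ⟨σ, hσ, -⟩ := existsUnique_isReading R S
    obtain ⟨S', c, rfl⟩ := exists_zopAdd_eq_of_isReading hσ
    obtain ⟨f, rfl⟩ := ih S'
    exact ⟨Fin.snoc f (σ, c), by simp [zvecAdd]⟩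

variable (σs : ℕ → Equiv.Perm (Fin n)) (c : Fin k → Fin n → ℕ)

theorem desSet_zvecAdd :
    DesSet R (zvecAdd R k fun i => (σs i, c i)) = DesSet R (Zvec R σs k) := by
  cases k with
  | zero => rw [Subsingleton.elim (zvecAdd R 0 _) (Zvec R σs 0)]
  | succ k =>
    refine (isReading_zvecAdd_last R _).desSet_eq (τ := σs k) ?_
    rw [Zvec, ← zopAdd_zero]
    exact isReading_zopAdd R _ _ _

theorem sum_zvecAdd_rev (i : Fin k) :
    ∑ v, zvecAdd R k (fun i => (σs i, c i)) v i.rev =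
      Comaj R (Zvec R σs i) (σs i) + ∑ j, c i j * (n - j) := by
  induction k with
  | zero => exact i.elim0
  | succ k ih =>
    cases i using Fin.lastCases with
    | last =>
      rw [Fin.rev_last, Fin.val_last, Comaj, ← desSet_zvecAdd σs (Fin.init c)]
      exact sum_zopAdd_apply_zero _
    | cast i =>
      rw [Fin.rev_castSucc]
      exact ih (Fin.init c) i

end Iteration

section Specialization

variable {n K : ℕ} {R : Finset ℕ}

/-- The list attached to the permutations `σ¹, …, σᴷ, ε` and the increments `c`. -/
def zvecExt (R : Finset ℕ) (p : (Fin K → Equiv.Perm (Fin n)) × (Fin (K + 1) × Fin n → ℕ)) :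
    Fin n → Seq (K + 1) :=
  zvecAdd R (K + 1) fun i => (extFun p.1 i, fun j => p.2 (i, j))

theorem extFun_val (σv : Fin K → Equiv.Perm (Fin n)) (i : Fin K) : extFun σv i = σv i := by
  simp [extFun]

theorem extFun_self (σv : Fin K → Equiv.Perm (Fin n)) : extFun σv K = 1 := by
  simp [extFun]

theorem zvecExt_injective (R : Finset ℕ) : Function.Injective (zvecExt (n := n) (K := K) R) := by
  rintro ⟨σv, c⟩ ⟨σv', c'⟩ h
  have h := funext_iff.1 (zvecAdd_injective R _ h)
  refine Prod.ext (funext fun i => ?_) (funext fun q => ?_)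
  · simpa [extFun] using congrArg Prod.fst (h i.castSucc)
  · exact congrFun (congrArg Prod.snd (h q.1)) q.2

theorem isReading_one_iff_mem_range_zvecExt {S : Fin n → Seq (K + 1)} :
    IsReading R S 1 ↔ S ∈ Set.range (zvecExt R) := by
  constructor
  · intro h
    obtain ⟨f, rfl⟩ := zvecAdd_surjective R _ S
    have hlast := (existsUnique_isReading R _).unique (isReading_zvecAdd_last R f) h
    refine ⟨(fun i => (f i.castSucc).1, fun q => (f q.1).2 q.2), congrArg _ (funext fun i => ?_)⟩
    cases i using Fin.lastCases with
    | last => exact Prod.ext ((extFun_self _).trans hlast.symm) rfl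
    | cast i => exact Prod.ext (extFun_val _ i) rfl
  · rintro ⟨⟨σv, c⟩, rfl⟩
    rw [← extFun_self σv]
    exact isReading_zvecAdd_last R _

theorem expOf_zvecExt (p : (Fin K → Equiv.Perm (Fin n)) × (Fin (K + 1) × Fin n → ℕ)) :
    expOf (zvecExt R p) =
      comajExp R (K + 1) p.1 + ∑ q, p.2 q • Finsupp.single q.1 (n - (q.2 : ℕ)) := by
  ext i
  calc expOf (zvecExt R p) i = comajExp R (K + 1) p.1 i + ∑ j, p.2 (i, j) * (n - j) :=
        sum_zvecAdd_rev (extFun p.1) _ i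
    _ = _ := by
        rw [Finsupp.add_apply, Finsupp.finsetSum_apply, Fintype.sum_prod_type,
          Fintype.sum_eq_single i fun x hx => by simp [hx]]
        simp

end Specialization

theorem pochAll_eq_prod_one_sub_monomial (n k : ℕ) :
    pochAll n k =
      ∏ q : Fin k × Fin n, (1 - MvPowerSeries.monomial (Finsupp.single q.1 (n - (q.2 : ℕ))) 1) := by
  rw [Fintype.prod_prod_type]
  refine Finset.prod_congr rfl fun i _ => ?_
  simp only [pochOne, MvPowerSeries.X_pow_eq]
  rw [Fin.prod_univ_eq_prod_range
    fun j => 1 - MvPowerSeries.monomial (R := ℤ) (Finsupp.single i (n - j)) 1]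
  refine Finset.prod_nbij' (n - ·) (n - ·) ?_ ?_ ?_ ?_ fun j hj => ?_
  case refine_5 => rw [Nat.sub_sub_self (Finset.mem_Icc.1 hj).2]
  all_goals
    simp only [Finset.mem_Icc, Finset.mem_range]
    omega

instance SYT.instFinite (μ : YoungDiagram) : Finite (SYT μ) := by
  let f (T : SYT μ) (i : Finset.Icc 1 μ.card) : μ.cells :=
    ⟨T.pos i, (YoungDiagram.mem_cells _).2 (T.mem i i.2)⟩
  refine Finite.of_injective f fun T T' h => ?_
  have hpos : T.pos = T'.pos := by
    funext i
    by_cases hi : i ∈ Finset.Icc 1 μ.card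
    · exact congrArg Subtype.val (congrFun h ⟨i, hi⟩)
    · rw [T.junk i hi, T'.junk i hi]
  cases T
  cases T'
  congr

theorem finite_evaluation_general {ι : Type*} [Finite ι] (R : ι → Finset ℕ) (n k : ℕ)
    (hk : 1 ≤ k) :
    pochAll n k *
      countSeriesP (α := ι × (Fin n → Seq k))
        (fun TS d => IsReading (R TS.1) TS.2 1 ∧ expOf TS.2 = d) =
    countSeriesP (α := ι × (Fin (k - 1) → Equiv.Perm (Fin n)))
      (fun Tv d => comajExp (R Tv.1) k Tv.2 = d) := by
  obtain ⟨K, rfl⟩ := Nat.exists_eq_add_of_le' hk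
  let f (p : (ι × (Fin K → Equiv.Perm (Fin n))) × (Fin (K + 1) × Fin n → ℕ)) :
      ι × (Fin n → Seq (K + 1)) :=
    (p.1.1, zvecExt (R p.1.1) (p.1.2, p.2))
  have hf : f.Injective := by
    rintro ⟨⟨T, σv⟩, c⟩ ⟨⟨T', σv'⟩, c'⟩ h
    obtain ⟨rfl, h⟩ := Prod.mk.inj h
    obtain ⟨rfl, rfl⟩ := Prod.mk.inj (zvecExt_injective _ h)
    rfl
  have hrange : ∀ TS : ι × (Fin n → Seq (K + 1)),
      IsReading (R TS.1) TS.2 1 ↔ TS ∈ Set.range f := by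
    rintro ⟨T, S⟩
    simp [isReading_one_iff_mem_range_zvecExt, f]
  have hexp : (fun TS => expOf TS.2) ∘ f = fun p =>
      comajExp (R p.1.1) (K + 1) p.1.2 + ∑ q, p.2 q • Finsupp.single q.1 (n - (q.2 : ℕ)) :=
    funext fun p => expOf_zvecExt (p.1.2, p.2)
  have he : ∀ q : Fin (K + 1) × Fin n, Finsupp.single q.1 (n - (q.2 : ℕ)) ≠ 0 := fun q =>
    Finsupp.single_ne_zero.2 (Nat.sub_ne_zero_of_lt q.2.2)
  rw [countSeriesP_eq_genSeries_comp hf hrange, hexp, pochAll_eq_prod_one_sub_monomial]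
  exact prod_one_sub_monomial_mul_genSeries he
    (w := fun p : ι × (Fin K → Equiv.Perm (Fin n)) => comajExp (R p.1) (K + 1) p.2)
    fun d => Set.toFinite _

/-- **Theorem (Schur-function principal evaluation, finite case).**
For `λ ⊢ n` and `k ≥ 1`, as power series in `q_1, …, q_k`,
`(∏ᵢ (qᵢ;qᵢ)_n) ⬝ ∑_{T ∈ SYT(λ)} ∑_{S ∈ (ℕ^k)^n, σ_{des T}(S) = ε} q^S
  = ∑_{T ∈ SYT(λ)} ∑_{σ⃗ ∈ S_n^{k−1}} q_1^{comaj¹_T(σ⃗)} ⋯ q_k^{comaj^k_T(σ⃗)}`,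
both sides written coefficientwise as counting series. -/
theorem finite_evaluation (n k : ℕ) (hn : 1 ≤ n) (hk : 1 ≤ k)
    (μ : YoungDiagram) (hμ : μ.card = n) :
    pochAll n k *
      countSeriesP (α := SYT μ × (Fin n → Seq k))
        (fun TS d => IsReading (desSYT TS.1) TS.2 1 ∧ expOf TS.2 = d) =
    countSeriesP (α := SYT μ × (Fin (k-1) → Equiv.Perm (Fin n)))
      (fun Tv d => comajExp (desSYT Tv.1) k Tv.2 = d) :=
  finite_evaluation_general desSYT n k hk

end

end RomeroComaj
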